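/- Let ξ be an F_T-measurable random variable and assume that for every probability Q equivalent to P with E_Q[|ξ|] < ∞, the Q-martingale t ↦ E_Q[ξ | F_t] admits a modification M^Q with a.s. continuous paths. Then B^{2,0}(ξ) ≠ ∅ if and only if there exists a probability measure Q equivalent to P with E_Q[|ξ|] < ∞ such that, with β̂^Q_t = M^Q_t/(T−t) − ∫₀^t M^Q_u/(T−u)² du, one has E_Q[∫₀^T (β̂^Q_t)² dt] < ∞. -/

import Mathlib

open MeasureTheory Filter Set
open scoped ENNReal Topology

/-- `β ∈ B^{2,0}(ξ)` (under `μ`) : `β` is progressively measurable,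
`∫₀^T β_u² du < ∞` a.s., and `∫₀^T β_u du = ξ` almost surely. -/
def MemB20 {Ω : Type*} {mΩ : MeasurableSpace Ω} (μ : Measure Ω) (ℱ : Filtration ℝ mΩ)
    (T : ℝ) (ξ : Ω → ℝ) (β : ℝ → Ω → ℝ) : Prop :=
  ProgMeasurable ℱ β ∧
  (∀ᵐ ω ∂μ, (∫⁻ u in Set.Ioc (0:ℝ) T, ENNReal.ofReal ((β u ω)^2)) < ⊤) ∧
  ∀ᵐ ω ∂μ, ∫ u in Set.Ioc (0:ℝ) T, β u ω = ξ ω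

/-- `M` is a modification, with a.s. continuous paths on `[0,T]`, of the
`Q`-martingale `t ↦ E_Q[ξ | ℱ t]`. -/
def IsContModOfCondexpMart {Ω : Type*} {mΩ : MeasurableSpace Ω} (Q : Measure Ω)
    (ℱ : Filtration ℝ mΩ) (T : ℝ) (ξ : Ω → ℝ) (M : ℝ → Ω → ℝ) : Prop :=
  Adapted ℱ M ∧
  (∀ᵐ ω ∂Q, ContinuousOn (fun t => M t ω) (Set.Icc 0 T)) ∧
  ∀ t ∈ Set.Icc (0:ℝ) T, M t =ᵐ[Q] Q[ξ|ℱ t]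

/-! For any path, `(T - t) β̂_t = M_t - ∫₀ᵗ β̂`. If `M` is continuous up to `T`, the right-hand
side has a limit at `T`; the limit is `0` as soon as `β̂` is integrable, since `1 / (T - t)` is
not. Hence `∫₀ᵀ β̂ = M_T = ξ`, and finite expected energy makes `β̂` square integrable along
almost every path.

Conversely let `β ∈ B^{2,0}(ξ)`. Under the equivalent probability of density proportional to
`1 / (1 + ∫₀ᵀ β²)` the energy of `β` is integrable. Comparing `M_t = E_Q[ξ | ℱ t]` with
`∫₀ᵗ β`, which is `ℱ t`-measurable, gives `E_Q |ξ - M_t|² ≤ 4 E_Q (∫_t^T |β|)²`, so Hardy's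
inequality bounds `E_Q ∫₀ᵀ ((ξ - M_t) / (T - t))² dt` by the energy of `β`. As the drift of a
constant path is constant, the dual Hardy inequality applied to the path `t ↦ ξ - M_t` then
bounds the energy of `β̂`. -/

section SchurTest

variable {α β : Type*} {mα : MeasurableSpace α} {mβ : MeasurableSpace β} {μ : Measure α}
  {ν : Measure β}

theorem sq_lintegral_le_of_sq_le_mul {f g h : α → ℝ≥0∞} (hg : AEMeasurable g μ)
    (hh : AEMeasurable h μ) (hf : ∀ᵐ x ∂μ, f x ^ 2 ≤ g x * h x) :
    (∫⁻ x, f x ∂μ) ^ 2 ≤ (∫⁻ x, g x ∂μ) * ∫⁻ x, h x ∂μ := by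
  have sqrt_sq (a : ℝ≥0∞) : (a ^ (1 / 2 : ℝ)) ^ 2 = a := by
    rw [← ENNReal.rpow_two, ← ENNReal.rpow_mul]; norm_num
  have hroot : ∫⁻ x, f x ∂μ ≤ (∫⁻ x, g x ∂μ) ^ (1 / 2 : ℝ) * (∫⁻ x, h x ∂μ) ^ (1 / 2 : ℝ) :=
    calc ∫⁻ x, f x ∂μ ≤ ∫⁻ x, g x ^ (1 / 2 : ℝ) * h x ^ (1 / 2 : ℝ) ∂μ :=
          lintegral_mono_ae (hf.mono fun x hx => (ENNReal.pow_le_pow_left_iff two_ne_zero).1 <| by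
            rwa [mul_pow, sqrt_sq, sqrt_sq])
      _ ≤ _ := ENNReal.lintegral_mul_norm_pow_le hg hh (by norm_num) (by norm_num) (by norm_num)
  calc (∫⁻ x, f x ∂μ) ^ 2 ≤ _ := pow_le_pow_left' hroot 2
    _ = (∫⁻ x, g x ∂μ) * ∫⁻ x, h x ∂μ := by rw [mul_pow, sqrt_sq, sqrt_sq]

theorem sq_lintegral_le_measure_univ_mul {f : α → ℝ≥0∞} (hf : AEMeasurable f μ) :
    (∫⁻ x, f x ∂μ) ^ 2 ≤ μ univ * ∫⁻ x, f x ^ 2 ∂μ := by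
  simpa only [lintegral_one] using sq_lintegral_le_of_sq_le_mul (aemeasurable_const (b := 1))
    (hf.pow_const 2) (Eventually.of_forall fun x => (one_mul (f x ^ 2)).ge)

theorem lintegral_mul_lintegral_mul_comm [SFinite μ] [SFinite ν] {K : α → β → ℝ≥0∞}
    (hK : Measurable (Function.uncurry K)) {f : α → ℝ≥0∞} {g : β → ℝ≥0∞} (hf : AEMeasurable f μ)
    (hg : AEMeasurable g ν) :
    ∫⁻ x, f x * ∫⁻ y, K x y * g y ∂ν ∂μ = ∫⁻ y, (∫⁻ x, K x y * f x ∂μ) * g y ∂ν :=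
  calc ∫⁻ x, f x * ∫⁻ y, K x y * g y ∂ν ∂μ
      = ∫⁻ x, ∫⁻ y, f x * (K x y * g y) ∂ν ∂μ := lintegral_congr fun _ =>
        (lintegral_const_mul'' _ (hK.of_uncurry_left.aemeasurable.mul hg)).symm
    _ = ∫⁻ y, ∫⁻ x, f x * (K x y * g y) ∂μ ∂ν :=
        lintegral_lintegral_swap (hf.comp_fst.mul (hK.aemeasurable.mul hg.comp_snd))
    _ = ∫⁻ y, ∫⁻ x, K x y * f x * g y ∂μ ∂ν := by simp only [mul_left_comm, mul_assoc]
    _ = ∫⁻ y, (∫⁻ x, K x y * f x ∂μ) * g y ∂ν := lintegral_congr fun _ =>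
        lintegral_mul_const'' _ (hK.of_uncurry_right.aemeasurable.mul hf)

theorem schur_test [SFinite μ] [SFinite ν] {K : α → β → ℝ≥0∞}
    (hK : Measurable (Function.uncurry K)) {h : α → ℝ≥0∞} {k : β → ℝ≥0∞} (hh : AEMeasurable h μ)
    (hk : AEMeasurable k ν) (hk₀ : ∀ᵐ y ∂ν, k y ≠ 0) (hk_top : ∀ᵐ y ∂ν, k y ≠ ∞) {A B : ℝ≥0∞}
    (hKk : ∀ᵐ x ∂μ, ∫⁻ y, K x y * k y ∂ν ≤ A * h x)
    (hKh : ∀ᵐ y ∂ν, ∫⁻ x, K x y * h x ∂μ ≤ B * k y) {f : β → ℝ≥0∞} (hf : AEMeasurable f ν) :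
    ∫⁻ x, (∫⁻ y, K x y * f y ∂ν) ^ 2 ∂μ ≤ A * B * ∫⁻ y, f y ^ 2 ∂ν := by
  have hg : AEMeasurable (fun y => f y ^ 2 * (k y)⁻¹) ν := (hf.pow_const 2).mul hk.inv
  have hKx (x : α) : AEMeasurable (K x) ν := hK.of_uncurry_left.aemeasurable
  have cauchy_schwarz (x : α) : (∫⁻ y, K x y * f y ∂ν) ^ 2
      ≤ (∫⁻ y, K x y * k y ∂ν) * ∫⁻ y, K x y * (f y ^ 2 * (k y)⁻¹) ∂ν := by
    refine sq_lintegral_le_of_sq_le_mul ((hKx x).mul hk) ((hKx x).mul hg) ?_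
    filter_upwards [hk₀, hk_top] with y h₀ h_top
    calc (K x y * f y) ^ 2 = (K x y * f y) ^ 2 * (k y * (k y)⁻¹) := by
          rw [ENNReal.mul_inv_cancel h₀ h_top, mul_one]
      _ = K x y * k y * (K x y * (f y ^ 2 * (k y)⁻¹)) := by ring
      _ ≤ _ := le_rfl
  calc ∫⁻ x, (∫⁻ y, K x y * f y ∂ν) ^ 2 ∂μ
      ≤ ∫⁻ x, A * h x * ∫⁻ y, K x y * (f y ^ 2 * (k y)⁻¹) ∂ν ∂μ :=
        lintegral_mono_ae (hKk.mono fun x hx => (cauchy_schwarz x).trans (by gcongr))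
    _ = ∫⁻ y, (∫⁻ x, K x y * (A * h x) ∂μ) * (f y ^ 2 * (k y)⁻¹) ∂ν :=
        lintegral_mul_lintegral_mul_comm hK (hh.const_mul A) hg
    _ ≤ ∫⁻ y, A * B * f y ^ 2 ∂ν := by
        refine lintegral_mono_ae ?_
        filter_upwards [hk₀, hk_top, hKh] with y h₀ h_top hy
        calc (∫⁻ x, K x y * (A * h x) ∂μ) * (f y ^ 2 * (k y)⁻¹)
            = (∫⁻ x, A * (K x y * h x) ∂μ) * (f y ^ 2 * (k y)⁻¹) := by
              simp only [mul_left_comm]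
          _ = A * (∫⁻ x, K x y * h x ∂μ) * (f y ^ 2 * (k y)⁻¹) := congrArg (· * _)
              (lintegral_const_mul'' _ (hK.of_uncurry_right.aemeasurable.mul hh))
          _ ≤ A * (B * k y) * (f y ^ 2 * (k y)⁻¹) := by gcongr
          _ = A * B * f y ^ 2 * (k y * (k y)⁻¹) := by ring
          _ = A * B * f y ^ 2 := by rw [ENNReal.mul_inv_cancel h₀ h_top, mul_one]
    _ = A * B * ∫⁻ y, f y ^ 2 ∂ν := lintegral_const_mul'' _ (hf.pow_const 2)

end SchurTest

section Hardy

theorem setLIntegral_Ioo_sub_rpow {r s t b : ℝ} (hr : r + 1 ≠ 0) (hst : s < t) (htb : t ≤ b)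
    (h : -1 < r ∨ t < b) :
    ∫⁻ u in Ioo s t, ENNReal.ofReal ((b - u) ^ r)
      = ENNReal.ofReal (((b - s) ^ (r + 1) - (b - t) ^ (r + 1)) / (r + 1)) := by
  have hr' : -1 < r ∨ r ≠ -1 ∧ (0 : ℝ) ∉ uIcc (b - t) (b - s) :=
    h.imp_right fun htb => ⟨fun h => hr (by linarith), by
      rw [uIcc_of_le (by linarith)]
      exact fun h => h.1.not_gt (sub_pos.2 htb)⟩
  have hint : IntervalIntegrable (fun u => (b - u) ^ r) volume s t := by
    have hrpow : IntervalIntegrable (fun x : ℝ => x ^ r) volume (b - s) (b - t) :=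
      hr'.elim intervalIntegral.intervalIntegrable_rpow' fun h =>
        intervalIntegral.intervalIntegrable_rpow (.inr (uIcc_comm (b - t) (b - s) ▸ h.2))
    simpa only [sub_sub_cancel] using hrpow.comp_sub_left b
  have hnonneg : ∀ᵐ u ∂volume.restrict (Ioc s t), 0 ≤ (b - u) ^ r := by
    filter_upwards [ae_restrict_mem measurableSet_Ioc] with u hu
    exact Real.rpow_nonneg (sub_nonneg.2 (hu.2.trans htb)) _
  rw [restrict_Ioo_eq_restrict_Ioc, ← ofReal_integral_eq_lintegral_ofReal
    ((intervalIntegrable_iff_integrableOn_Ioc_of_le hst.le).1 hint) hnonneg,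
    ← intervalIntegral.integral_of_le hst.le,
    intervalIntegral.integral_comp_sub_left (fun x : ℝ => x ^ r) b, integral_rpow hr']

/-- The kernel of the Hardy operator `f ↦ (t ↦ (b - t)⁻¹ * ∫ u in t..b, f u)`, which averages `f`
up to the right endpoint `b`. The Schur test is applied to it and to its transpose. -/
noncomputable def hardyKernel (b t u : ℝ) : ℝ≥0∞ :=
  if t < u then ENNReal.ofReal (b - t)⁻¹ else 0

/-- The Schur weight of `hardyKernel`, the function `u ↦ (b - u) ^ (-1 / 2)`. -/
noncomputable def hardyWeight (b u : ℝ) : ℝ≥0∞ :=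
  ENNReal.ofReal ((b - u) ^ (-1 / 2 : ℝ))

variable {a b t u : ℝ} {f : ℝ → ℝ≥0∞}

theorem measurable_hardyKernel : Measurable (Function.uncurry (hardyKernel b)) :=
  Measurable.ite (measurableSet_lt measurable_fst measurable_snd) (by fun_prop) measurable_const

theorem measurable_hardyWeight : Measurable (hardyWeight b) := by
  unfold hardyWeight
  fun_prop

theorem hardyWeight_ne_zero (hu : u < b) : hardyWeight b u ≠ 0 :=
  (ENNReal.ofReal_pos.2 (Real.rpow_pos_of_pos (sub_pos.2 hu) _)).ne'

theorem setLIntegral_hardyKernel_mul (ht : a ≤ t)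
    (hf : AEMeasurable f (volume.restrict (Ioo a b))) :
    ∫⁻ u in Ioo a b, hardyKernel b t u * f u
      = ENNReal.ofReal (b - t)⁻¹ * ∫⁻ u in Ioo t b, f u := by
  have hK (u : ℝ) : hardyKernel b t u * f u
      = (Ioi t).indicator (fun u => ENNReal.ofReal (b - t)⁻¹ * f u) u := by
    by_cases h : t < u <;> simp [hardyKernel, h]
  have hset : Ioi t ∩ Ioo a b = Ioo t b := by
    rw [inter_comm, Ioo_inter_Ioi, max_eq_right ht]
  simp only [hK]
  rw [setLIntegral_indicator measurableSet_Ioi, hset]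
  exact lintegral_const_mul'' _
    (hf.mono_measure (Measure.restrict_mono (Ioo_subset_Ioo_left ht) le_rfl))

theorem setLIntegral_hardyKernel_transpose_mul (hu : u ≤ b) :
    ∫⁻ t in Ioo a b, hardyKernel b t u * f t
      = ∫⁻ t in Ioo a u, ENNReal.ofReal (b - t)⁻¹ * f t := by
  have hK (t : ℝ) : hardyKernel b t u * f t
      = (Iio u).indicator (fun t => ENNReal.ofReal (b - t)⁻¹ * f t) t := by
    by_cases h : t < u <;> simp [hardyKernel, h]
  have hset : Iio u ∩ Ioo a b = Ioo a u := by
    rw [inter_comm, Ioo_inter_Iio, min_eq_right hu]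
  simp only [hK]
  rw [setLIntegral_indicator measurableSet_Iio, hset]

theorem setLIntegral_hardyKernel_mul_hardyWeight (ht : t ∈ Ioo a b) :
    ∫⁻ u in Ioo a b, hardyKernel b t u * hardyWeight b u = 2 * hardyWeight b t := by
  have hbt : 0 < b - t := sub_pos.2 ht.2
  have hpow : (b - t) ^ (1 / 2 : ℝ) = (b - t) * (b - t) ^ (-1 / 2 : ℝ) := by
    rw [← Real.rpow_one_add' hbt.le (by norm_num)]
    norm_num
  rw [setLIntegral_hardyKernel_mul ht.1.le measurable_hardyWeight.aemeasurable]
  unfold hardyWeight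
  rw [setLIntegral_Ioo_sub_rpow (by norm_num) ht.2 le_rfl (.inl (by norm_num)),
    ← ENNReal.ofReal_mul (by positivity), ← ENNReal.ofReal_ofNat 2,
    ← ENNReal.ofReal_mul (by norm_num)]
  congr 1
  rw [sub_self, Real.zero_rpow (by norm_num), sub_zero,
    show (-1 / 2 : ℝ) + 1 = 1 / 2 by norm_num, hpow]
  field_simp

theorem setLIntegral_hardyKernel_transpose_mul_hardyWeight_le (hu : u ∈ Ioo a b) :
    ∫⁻ t in Ioo a b, hardyKernel b t u * hardyWeight b t ≤ 2 * hardyWeight b u := by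
  have hpow : ∀ t ∈ Ioo a u, ENNReal.ofReal (b - t)⁻¹ * hardyWeight b t
      = ENNReal.ofReal ((b - t) ^ (-3 / 2 : ℝ)) := fun t ht => by
    have hbt : 0 < b - t := sub_pos.2 (ht.2.trans hu.2)
    rw [hardyWeight, ← ENNReal.ofReal_mul (by positivity), ← Real.rpow_neg_one,
      ← Real.rpow_add hbt]
    norm_num
  have hba : 0 ≤ (b - a) ^ (-1 / 2 : ℝ) := Real.rpow_nonneg (by linarith [hu.1, hu.2]) _
  rw [setLIntegral_hardyKernel_transpose_mul hu.2.le,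
    setLIntegral_congr_fun measurableSet_Ioo hpow,
    setLIntegral_Ioo_sub_rpow (by norm_num) hu.1 hu.2.le (.inr hu.2), hardyWeight,
    ← ENNReal.ofReal_ofNat 2, ← ENNReal.ofReal_mul (by norm_num)]
  refine ENNReal.ofReal_le_ofReal ?_
  rw [show (-3 / 2 : ℝ) + 1 = -1 / 2 by norm_num]
  linarith

theorem hardy_inequality (hf : AEMeasurable f (volume.restrict (Ioo a b))) :
    ∫⁻ t in Ioo a b, (ENNReal.ofReal (b - t)⁻¹ * ∫⁻ u in Ioo t b, f u) ^ 2
      ≤ 4 * ∫⁻ u in Ioo a b, f u ^ 2 := by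
  have hmem : ∀ᵐ t ∂volume.restrict (Ioo a b), t ∈ Ioo a b := ae_restrict_mem measurableSet_Ioo
  rw [← setLIntegral_congr_fun measurableSet_Ioo
    fun t ht => congrArg (· ^ 2) (setLIntegral_hardyKernel_mul ht.1.le hf)]
  refine (schur_test measurable_hardyKernel measurable_hardyWeight.aemeasurable
    measurable_hardyWeight.aemeasurable (hmem.mono fun t ht => hardyWeight_ne_zero ht.2)
    (.of_forall fun _ => ENNReal.ofReal_ne_top)
    (hmem.mono fun t ht => (setLIntegral_hardyKernel_mul_hardyWeight ht).le)
    (hmem.mono fun t ht => setLIntegral_hardyKernel_transpose_mul_hardyWeight_le ht)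
    hf).trans_eq ?_
  norm_num

theorem dual_hardy_inequality (hf : AEMeasurable f (volume.restrict (Ioo a b))) :
    ∫⁻ u in Ioo a b, (∫⁻ t in Ioo a u, ENNReal.ofReal (b - t)⁻¹ * f t) ^ 2
      ≤ 4 * ∫⁻ u in Ioo a b, f u ^ 2 := by
  have hmem : ∀ᵐ t ∂volume.restrict (Ioo a b), t ∈ Ioo a b := ae_restrict_mem measurableSet_Ioo
  rw [← setLIntegral_congr_fun measurableSet_Ioo
    fun u hu => congrArg (· ^ 2) (setLIntegral_hardyKernel_transpose_mul hu.2.le)]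
  refine (schur_test (K := fun u t => hardyKernel b t u)
    (measurable_hardyKernel.comp measurable_swap) measurable_hardyWeight.aemeasurable
    measurable_hardyWeight.aemeasurable (hmem.mono fun t ht => hardyWeight_ne_zero ht.2)
    (.of_forall fun _ => ENNReal.ofReal_ne_top)
    (hmem.mono fun t ht => setLIntegral_hardyKernel_transpose_mul_hardyWeight_le ht)
    (hmem.mono fun t ht => (setLIntegral_hardyKernel_mul_hardyWeight ht).le) hf).trans_eq ?_
  norm_num

end Hardy

section Primitive

variable {E : Type*} [NormedAddCommGroup E] [NormedSpace ℝ E] {f : ℝ → E} {a b t : ℝ} {c : E}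

theorem continuousOn_setIntegral_Ioc (hf : ContinuousOn f (Ico a b)) :
    ContinuousOn (fun t => ∫ u in Ioc a t, f u) (Ico a b) := fun t ht => by
  obtain ⟨s, hts, hsb⟩ := exists_between ht.2
  have hs : ContinuousOn (fun t => ∫ u in Ioc a t, f u) (Icc a s) :=
    intervalIntegral.continuousOn_primitive (μ := volume)
      (hf.mono (Icc_subset_Ico_right hsb)).integrableOn_Icc
  exact (hs t ⟨ht.1, hts.le⟩).mono_of_mem_nhdsWithin
    (mem_nhdsWithin.2 ⟨Iio s, isOpen_Iio, hts, fun x hx => ⟨hx.2.1, hx.1.le⟩⟩)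

theorem hasDerivAt_setIntegral_Ioc [CompleteSpace E] (hf : ContinuousOn f (Ico a b))
    (ht : t ∈ Ioo a b) :
    HasDerivAt (fun t => ∫ u in Ioc a t, f u) (f t) t := by
  have hderiv : HasDerivAt (fun t => ∫ u in a..t, f u) (f t) t :=
    intervalIntegral.integral_hasDerivAt_right
      ((hf.mono (Icc_subset_Ico_right ht.2)).intervalIntegrable_of_Icc ht.1.le)
      ((hf.mono Ioo_subset_Ico_self).stronglyMeasurableAtFilter isOpen_Ioo t ht)
      (hf.continuousAt (Ico_mem_nhds ht.1 ht.2))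
  exact hderiv.congr_of_eventuallyEq ((lt_mem_nhds ht.1).mono fun x hx =>
    (intervalIntegral.integral_of_le hx.le).symm)

theorem eq_zero_of_tendsto_sub_smul_of_integrableOn (hab : a < b) (hf : IntegrableOn f (Ioo a b))
    (hlim : Tendsto (fun t => (b - t) • f t) (𝓝[<] b) (𝓝 c)) : c = 0 := by
  -- Otherwise `f` would dominate the derivative of `t ↦ log (b - t)`, which is unbounded near `b`.
  by_contra hc
  have hderiv {t : ℝ} (ht : t < b) : HasDerivAt (fun t => Real.log (b - t)) (-1 / (b - t)) t :=
    ((hasDerivAt_id t).const_sub b).log (sub_pos.2 ht).ne'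
  have hbot : Tendsto (fun t => b - t) (𝓝[<] b) (𝓝[>] 0) :=
    tendsto_nhdsWithin_iff.2 ⟨(Continuous.tendsto' (by fun_prop) b 0 (sub_self b)).mono_left
      nhdsWithin_le_nhds, eventually_mem_nhdsWithin.mono fun t ht => mem_Ioi.2 (sub_pos.2 ht)⟩
  refine not_integrableOn_of_tendsto_norm_atTop_of_deriv_isBigO_filter (𝓝[<] b)
    (Ioo_mem_nhdsLT hab) (eventually_mem_nhdsWithin.mono fun t ht => (hderiv ht).differentiableAt)
    (tendsto_abs_atBot_atTop.comp (Real.tendsto_log_nhdsGT_zero.comp hbot)) ?_ hf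
  have hO : (fun _ => (1 : ℝ)) =O[𝓝[<] b] fun t => (b - t) • f t :=
    (Asymptotics.isBigO_const_const 1 hc _).trans
      ((Asymptotics.isEquivalent_const_iff_tendsto hc).2 hlim).symm.isBigO
  refine ((Asymptotics.isBigO_refl (fun t => -1 / (b - t)) _).smul hO).congr' ?_ ?_ |>.trans
    (Asymptotics.isBigO_refl f _).neg_left
  · filter_upwards [self_mem_nhdsWithin] with t ht
    rw [(hderiv ht).deriv, smul_eq_mul, mul_one]
  · filter_upwards [self_mem_nhdsWithin] with t ht
    rw [smul_smul, div_mul_cancel₀ _ (sub_pos.2 ht).ne', neg_one_smul]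

end Primitive

section BridgeDrift

/-- The drift `β̂` of a path `m` on `[0, T)`, for paths that are to be brought to `m T` at time `T`:
the process `β̂^Q` is `fun t ω => bridgeDrift T (fun u => M^Q u ω) t`. The value at `t = T` is
meaningless (`m T / 0 = 0`). -/
noncomputable def bridgeDrift (T : ℝ) (m : ℝ → ℝ) (t : ℝ) : ℝ :=
  m t / (T - t) - ∫ u in Ioc (0 : ℝ) t, m u / (T - u) ^ 2

variable {T t : ℝ} {m : ℝ → ℝ}

theorem bridgeDrift_congr {m' : ℝ → ℝ} (h : EqOn m m' (Icc 0 T)) (ht : t ∈ Icc 0 T) :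
    bridgeDrift T m t = bridgeDrift T m' t := by
  unfold bridgeDrift
  rw [h ht, setIntegral_congr_fun measurableSet_Ioc fun u hu => by
    rw [h ⟨hu.1.le, hu.2.trans ht.2⟩]]

theorem continuousOn_div_sub_sq (hm : ContinuousOn m (Ico 0 T)) :
    ContinuousOn (fun u => m u / (T - u) ^ 2) (Ico 0 T) :=
  hm.div (by fun_prop) fun _ hu => pow_ne_zero _ (sub_pos.2 hu.2).ne'

theorem integrableOn_div_sub_sq (hm : ContinuousOn m (Ico 0 T)) (ht : t < T) :
    IntegrableOn (fun u => m u / (T - u) ^ 2) (Ioc 0 t) :=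
  ((continuousOn_div_sub_sq hm).mono (Icc_subset_Ico_right ht)).integrableOn_Icc.mono_set
    Ioc_subset_Icc_self

theorem continuousOn_bridgeDrift (hm : ContinuousOn m (Ico 0 T)) :
    ContinuousOn (bridgeDrift T m) (Ico 0 T) :=
  (hm.div (by fun_prop) fun _ hu => (sub_pos.2 hu.2).ne').sub
    (continuousOn_setIntegral_Ioc (continuousOn_div_sub_sq hm))

theorem integral_bridgeDrift (hm : ContinuousOn m (Ico 0 T)) (ht : t ∈ Ico 0 T) :
    ∫ u in 0..t, bridgeDrift T m u = m t - (T - t) * bridgeDrift T m t := by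
  set primitive : ℝ → ℝ := fun s => ∫ u in Ioc (0 : ℝ) s, m u / (T - u) ^ 2 with hprimitive
  have hcont : ContinuousOn (fun s => (T - s) * primitive s) (Ico 0 T) :=
    ContinuousOn.mul (by fun_prop) (continuousOn_setIntegral_Ioc (continuousOn_div_sub_sq hm))
  have hderiv : ∀ s ∈ Ioo 0 t,
      HasDerivAt (fun s => (T - s) * primitive s) (bridgeDrift T m s) s := fun s hs => by
    have hsT : s < T := hs.2.trans ht.2
    refine (((hasDerivAt_id s).const_sub T).mul (hasDerivAt_setIntegral_Ioc
      (continuousOn_div_sub_sq hm) ⟨hs.1, hsT⟩)).congr_deriv ?_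
    have : T - s ≠ 0 := (sub_pos.2 hsT).ne'
    simp only [bridgeDrift, id]
    field_simp
    ring
  have hsub : Icc 0 t ⊆ Ico 0 T := Icc_subset_Ico_right ht.2
  have hTt : T - t ≠ 0 := (sub_pos.2 ht.2).ne'
  calc ∫ u in 0..t, bridgeDrift T m u = (T - t) * primitive t - (T - 0) * primitive 0 :=
        intervalIntegral.integral_eq_sub_of_hasDerivAt_of_le ht.1 (hcont.mono hsub) hderiv
          (((continuousOn_bridgeDrift hm).mono hsub).intervalIntegrable_of_Icc ht.1)
    _ = m t - (T - t) * bridgeDrift T m t := by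
        simp only [hprimitive, bridgeDrift, Ioc_self, setIntegral_empty]
        field_simp
        ring

theorem setIntegral_bridgeDrift (hT : 0 < T) (hm : ContinuousOn m (Icc 0 T))
    (hint : IntegrableOn (bridgeDrift T m) (Ioc 0 T)) :
    ∫ u in Ioc (0 : ℝ) T, bridgeDrift T m u = m T := by
  have hII : IntervalIntegrable (bridgeDrift T m) volume 0 T :=
    (intervalIntegrable_iff_integrableOn_Ioc_of_le hT.le).2 hint
  have hnhds : 𝓝[<] T ≤ 𝓝[Icc 0 T] T := nhdsWithin_le_of_mem (Icc_mem_nhdsLT hT)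
  have hprimitive : Tendsto (fun t => ∫ u in 0..t, bridgeDrift T m u) (𝓝[<] T)
      (𝓝 (∫ u in 0..T, bridgeDrift T m u)) := by
    have := intervalIntegral.continuousOn_primitive_interval' hII left_mem_uIcc T right_mem_uIcc
    rw [uIcc_of_le hT.le] at this
    exact this.mono_left hnhds
  have hscaled : Tendsto (fun t => (T - t) * bridgeDrift T m t) (𝓝[<] T)
      (𝓝 (m T - ∫ u in 0..T, bridgeDrift T m u)) := by
    refine (((hm T ⟨hT.le, le_rfl⟩).mono_left hnhds).sub hprimitive).congr' ?_
    filter_upwards [Ico_mem_nhdsLT hT] with t ht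
    rw [integral_bridgeDrift (hm.mono Ico_subset_Icc_self) ht, sub_sub_cancel]
  rw [← intervalIntegral.integral_of_le hT.le]
  exact (sub_eq_zero.1 (eq_zero_of_tendsto_sub_smul_of_integrableOn hT
    (hint.mono_set Ioo_subset_Ioc_self) hscaled)).symm

end BridgeDrift

section DriftBound

theorem ofReal_sq_eq_enorm_sq (x : ℝ) : ENNReal.ofReal (x ^ 2) = ‖x‖ₑ ^ 2 := by
  rw [← enorm_pow, Real.enorm_of_nonneg (sq_nonneg x)]

theorem add_sq_le_two_mul_sq_add_sq (x y : ℝ≥0∞) : (x + y) ^ 2 ≤ 2 * (x ^ 2 + y ^ 2) := by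
  simpa [show (2 : ℝ) - 1 = 1 by norm_num] using
    ENNReal.rpow_add_le_mul_rpow_add_rpow x y one_le_two

theorem lintegral_enorm_sub_sq_le {α E : Type*} {mα : MeasurableSpace α} [NormedAddCommGroup E]
    {μ : Measure α} {f g : α → E} (hf : AEStronglyMeasurable f μ) :
    ∫⁻ x, ‖f x - g x‖ₑ ^ 2 ∂μ ≤ 2 * (∫⁻ x, ‖f x‖ₑ ^ 2 ∂μ + ∫⁻ x, ‖g x‖ₑ ^ 2 ∂μ) :=
  calc ∫⁻ x, ‖f x - g x‖ₑ ^ 2 ∂μ ≤ ∫⁻ x, 2 * (‖f x‖ₑ ^ 2 + ‖g x‖ₑ ^ 2) ∂μ :=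
        lintegral_mono fun _ => (pow_le_pow_left' enorm_sub_le 2).trans
          (add_sq_le_two_mul_sq_add_sq _ _)
    _ = 2 * (∫⁻ x, ‖f x‖ₑ ^ 2 ∂μ + ∫⁻ x, ‖g x‖ₑ ^ 2 ∂μ) := by
        rw [lintegral_const_mul' _ _ (by finiteness), lintegral_add_left' (by fun_prop)]

theorem lintegral_enorm_setIntegral_smul_sq_le {E : Type*} [NormedAddCommGroup E]
    [NormedSpace ℝ E] {a b : ℝ} {f : ℝ → E}
    (hf : AEStronglyMeasurable f (volume.restrict (Ioo a b))) :
    ∫⁻ t in Ioo a b, ‖∫ u in Ioc a t, (b - u)⁻¹ • f u‖ₑ ^ 2 ≤ 4 * ∫⁻ t in Ioo a b, ‖f t‖ₑ ^ 2 := by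
  refine le_trans (setLIntegral_mono' measurableSet_Ioo fun t ht => ?_)
    (dual_hardy_inequality hf.enorm)
  refine pow_le_pow_left' ((enorm_integral_le_lintegral_enorm _).trans_eq ?_) 2
  rw [← restrict_Ioo_eq_restrict_Ioc]
  refine setLIntegral_congr_fun measurableSet_Ioo fun u hu => ?_
  rw [enorm_smul, Real.enorm_of_nonneg (inv_nonneg.2 (sub_pos.2 (hu.2.trans ht.2)).le)]

variable {T t : ℝ} {m : ℝ → ℝ}

theorem bridgeDrift_sub {m' : ℝ → ℝ} (hm : ContinuousOn m (Ico 0 T))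
    (hm' : ContinuousOn m' (Ico 0 T)) (ht : t < T) :
    bridgeDrift T (fun u => m u - m' u) t = bridgeDrift T m t - bridgeDrift T m' t := by
  simp only [bridgeDrift, sub_div]
  rw [integral_sub (integrableOn_div_sub_sq hm ht) (integrableOn_div_sub_sq hm' ht)]
  ring

theorem bridgeDrift_const (x : ℝ) (ht : t ∈ Ico 0 T) : bridgeDrift T (fun _ => x) t = x / T := by
  have hne : ∀ u ∈ Icc 0 t, T - u ≠ 0 := fun u hu => (sub_pos.2 (hu.2.trans_lt ht.2)).ne'
  have hderiv : ∀ u ∈ uIcc 0 t, HasDerivAt (fun u => x / (T - u)) (x / (T - u) ^ 2) u :=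
    fun u hu => by
      have hu' : T - u ≠ 0 := hne u (by rwa [uIcc_of_le ht.1] at hu)
      simpa [Pi.div_def] using (hasDerivAt_const u x).div ((hasDerivAt_id u).const_sub T) hu'
  rw [bridgeDrift, ← intervalIntegral.integral_of_le ht.1,
    intervalIntegral.integral_eq_sub_of_hasDerivAt hderiv
      ((intervalIntegrable_iff_integrableOn_Ioc_of_le ht.1).2
        (integrableOn_div_sub_sq continuousOn_const ht.2)), sub_zero, sub_sub_cancel]

theorem lintegral_enorm_bridgeDrift_sq_le (hm : ContinuousOn m (Ico 0 T)) :
    ∫⁻ t in Ioo 0 T, ‖bridgeDrift T m t‖ₑ ^ 2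
      ≤ 10 * ∫⁻ t in Ioo 0 T, ‖m t / (T - t)‖ₑ ^ 2 := by
  have hmeas : AEStronglyMeasurable (fun t => m t / (T - t)) (volume.restrict (Ioo 0 T)) :=
    ((hm.mono Ioo_subset_Ico_self).div (by fun_prop)
      fun _ ht => (sub_pos.2 ht.2).ne').aestronglyMeasurable measurableSet_Ioo
  have hdrift (t : ℝ) : bridgeDrift T m t
      = m t / (T - t) - ∫ u in Ioc 0 t, (T - u)⁻¹ • (m u / (T - u)) := by
    simp only [bridgeDrift, smul_eq_mul, inv_mul_eq_div, div_div, sq]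
  simp only [hdrift]
  calc _ ≤ 2 * ((∫⁻ t in Ioo 0 T, ‖m t / (T - t)‖ₑ ^ 2)
        + ∫⁻ t in Ioo 0 T, ‖∫ u in Ioc 0 t, (T - u)⁻¹ • (m u / (T - u))‖ₑ ^ 2) :=
        lintegral_enorm_sub_sq_le hmeas
    _ ≤ 2 * ((∫⁻ t in Ioo 0 T, ‖m t / (T - t)‖ₑ ^ 2)
        + 4 * ∫⁻ t in Ioo 0 T, ‖m t / (T - t)‖ₑ ^ 2) := by
        gcongr
        exact lintegral_enorm_setIntegral_smul_sq_le hmeas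
    _ = _ := by ring

theorem lintegral_enorm_bridgeDrift_sq_le_add (hm : ContinuousOn m (Ico 0 T)) (x : ℝ) :
    ∫⁻ t in Ioo 0 T, ‖bridgeDrift T m t‖ₑ ^ 2
      ≤ 2 * (‖x / T‖ₑ ^ 2 * ENNReal.ofReal T
        + 10 * ∫⁻ t in Ioo 0 T, ‖(x - m t) / (T - t)‖ₑ ^ 2) := by
  have hsub : ContinuousOn (fun t => x - m t) (Ico 0 T) := continuousOn_const.sub hm
  have hdrift : ∀ t ∈ Ioo 0 T,
      bridgeDrift T m t = x / T - bridgeDrift T (fun t => x - m t) t := fun t ht => by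
    rw [bridgeDrift_sub continuousOn_const hm ht.2, bridgeDrift_const x (Ioo_subset_Ico_self ht),
      sub_sub_cancel]
  calc _ = ∫⁻ t in Ioo 0 T, ‖x / T - bridgeDrift T (fun t => x - m t) t‖ₑ ^ 2 :=
        setLIntegral_congr_fun measurableSet_Ioo fun t ht => by rw [hdrift t ht]
    _ ≤ _ := lintegral_enorm_sub_sq_le aestronglyMeasurable_const
    _ ≤ _ := by
        rw [setLIntegral_const, Real.volume_Ioo, sub_zero]
        gcongr
        exact lintegral_enorm_bridgeDrift_sq_le hsub

end DriftBound

section Progressive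

variable {Ω ι β E : Type*} {mΩ : MeasurableSpace Ω}

theorem isStronglyProgressive_iff_stronglyMeasurable_min [LinearOrder ι] [MeasurableSpace ι]
    [MeasurableInf ι] [TopologicalSpace β] {ℱ : Filtration ι mΩ} {u : ι → Ω → β} :
    IsStronglyProgressive ℱ u ↔
      ∀ i, StronglyMeasurable[Prod.instMeasurableSpace (m₂ := ℱ i)]
        fun p : ι × Ω => u (min p.1 i) p.2 := by
  refine forall_congr' fun i => ?_
  let _ : MeasurableSpace Ω := ℱ i
  have hmin : Measurable fun p : ι × Ω => min p.1 i := measurable_fst.inf_const i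
  refine ⟨fun h => h.comp_measurable
    ((hmin.subtype_mk (h := fun p => mem_Iic.2 (min_le_right p.1 i))).prodMk measurable_snd),
    fun h => ?_⟩
  have hrestrict : (fun p : Iic i × Ω => u p.1 p.2) =
      (fun p : ι × Ω => u (min p.1 i) p.2) ∘ Prod.map Subtype.val id :=
    funext fun p => congrArg (u · p.2) (min_eq_left (mem_Iic.1 p.1.2)).symm
  rw [hrestrict]
  exact h.comp_measurable (measurable_subtype_coe.prodMap measurable_id)

theorem stronglyMeasurable_uncurry_of_isStronglyProgressive [LinearOrder ι]
    [Nonempty ι] [(atTop : Filter ι).IsCountablyGenerated] [MeasurableSpace ι] [MeasurableInf ι]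
    [TopologicalSpace β] [TopologicalSpace.PseudoMetrizableSpace β] {ℱ : Filtration ι mΩ}
    {u : ι → Ω → β} (hu : IsStronglyProgressive ℱ u) :
    StronglyMeasurable (Function.uncurry u) := by
  refine stronglyMeasurable_of_tendsto atTop (f := fun i (p : ι × Ω) => u (min p.1 i) p.2)
    (fun i => (isStronglyProgressive_iff_stronglyMeasurable_min.1 hu i).mono
      (sup_le_sup le_rfl (MeasurableSpace.comap_mono (ℱ.le i))))
    (tendsto_pi_nhds.2 fun p => tendsto_const_nhds.congr' ?_)
  filter_upwards [eventually_ge_atTop p.1] with i hi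
  rw [min_eq_left hi, Function.uncurry_def]

theorem isStronglyProgressive_deterministic [Preorder ι] [MeasurableSpace ι] [TopologicalSpace β]
    (ℱ : Filtration ι mΩ) {g : ι → β} (hg : StronglyMeasurable g) :
    IsStronglyProgressive ℱ fun t _ => g t := fun _ =>
  hg.comp_measurable (measurable_subtype_coe.comp measurable_fst)

variable [NormedAddCommGroup E] [NormedSpace ℝ E] {ℱ : Filtration ℝ mΩ}

theorem isStronglyProgressive_setIntegral_Ioc {u : ℝ → Ω → E} (hu : IsStronglyProgressive ℱ u)
    (a : ℝ) :
    IsStronglyProgressive ℱ fun t ω => ∫ s in Ioc a t, u s ω := by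
  rw [isStronglyProgressive_iff_stronglyMeasurable_min] at hu ⊢
  intro i
  let _ : MeasurableSpace Ω := ℱ i
  let S : Set ((ℝ × Ω) × ℝ) := {q | q.2 ∈ Ioc a (min q.1.1 i)}
  have hmin : Measurable fun q : (ℝ × Ω) × ℝ => min q.1.1 i := by fun_prop
  have hS : MeasurableSet S :=
    (measurableSet_lt measurable_const measurable_snd).inter (measurableSet_le measurable_snd hmin)
  have hind : StronglyMeasurable (S.indicator fun q => u (min q.2 i) q.1.2) :=
    ((hu i).comp_measurable
      (by fun_prop : Measurable fun q : (ℝ × Ω) × ℝ => (q.2, q.1.2))).indicator hS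
  convert hind.integral_prod_right' (ν := volume) using 2 with p
  rw [← integral_indicator measurableSet_Ioc]
  refine integral_congr_ae (.of_forall fun s => ?_)
  by_cases hs : s ∈ Ioc a (min p.1 i)
  · simp only [S, indicator, mem_ofPred_eq, if_pos hs, min_eq_left (hs.2.trans (min_le_right _ _))]
  · simp only [S, indicator, mem_ofPred_eq, if_neg hs]

theorem isStronglyProgressive_bridgeDrift (T : ℝ) {M : ℝ → Ω → ℝ}
    (hM : IsStronglyProgressive ℱ M) :
    IsStronglyProgressive ℱ fun t ω => bridgeDrift T (fun u => M u ω) t := by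
  have hdet {g : ℝ → ℝ} (hg : Measurable g) : IsStronglyProgressive ℱ fun t (_ : Ω) => g t :=
    isStronglyProgressive_deterministic ℱ hg.stronglyMeasurable
  simp only [bridgeDrift, div_eq_mul_inv]
  exact (hM.mul (hdet (by fun_prop))).sub
    (isStronglyProgressive_setIntegral_Ioc (hM.mul (hdet (by fun_prop))) 0)

end Progressive

section GridLimsup

variable {Ω : Type*} {mΩ : MeasurableSpace Ω} {ℱ : Filtration ℝ mΩ} {M : ℝ → Ω → ℝ} {T : ℝ}

/-- The upper limit of the values of `M` at the last point before `t` of the grid of mesh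
`1 / (n + 1)`. It is progressively measurable for every adapted `M` and agrees with `M` along the
left-continuous paths, which makes up for `M` being continuous only outside a null set that need
not belong to the filtration. -/
noncomputable def gridLimsup (M : ℝ → Ω → ℝ) (t : ℝ) (ω : Ω) : ℝ :=
  limsup (fun n : ℕ => M (⌊((n : ℝ) + 1) * t⌋ / ((n : ℝ) + 1)) ω) atTop

theorem floor_mul_div_le {c : ℝ} (hc : 0 < c) (t : ℝ) : (⌊c * t⌋ : ℝ) / c ≤ t :=
  (div_le_iff₀' hc).2 (Int.floor_le (c * t))

theorem isStronglyProgressive_gridLimsup (hM : Adapted ℱ M) :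
    IsStronglyProgressive ℱ (gridLimsup M) := by
  refine isStronglyProgressive_iff_stronglyMeasurable_min.2 fun i => ?_
  let _ : MeasurableSpace Ω := ℱ i
  refine (Measurable.limsup fun n => ?_).stronglyMeasurable
  have hn : (0 : ℝ) < (n : ℝ) + 1 := by positivity
  have hgrid : Measurable fun p : ℤ × Ω => M (min (p.1 / ((n : ℝ) + 1)) i) p.2 :=
    measurable_from_prod_countable_right fun k =>
      (hM (min (k / ((n : ℝ) + 1)) i)).mono (ℱ.mono (min_le_right _ _)) le_rfl
  have hfloor : Measurable fun p : ℝ × Ω => (⌊((n : ℝ) + 1) * min p.1 i⌋, p.2) :=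
    (Int.measurable_floor.comp (by fun_prop)).prodMk measurable_snd
  convert hgrid.comp hfloor using 2 with p
  exact congrArg (M · p.2)
    (min_eq_left ((floor_mul_div_le hn _).trans (min_le_right p.1 i))).symm

theorem gridLimsup_eq {t : ℝ} {ω : Ω} (ht : 0 ≤ t)
    (hM : ContinuousWithinAt (fun s => M s ω) (Icc 0 t) t) : gridLimsup M t ω = M t ω := by
  refine Tendsto.limsup_eq (hM.tendsto.comp (tendsto_nhdsWithin_iff.2 ⟨?_, .of_forall fun n => ?_⟩))
  · have hfloor := (tendsto_nat_floor_mul_div_atTop ht).comp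
      ((tendsto_natCast_atTop_atTop (R := ℝ)).comp (tendsto_add_atTop_nat 1))
    refine hfloor.congr fun n => ?_
    have hnt : (0 : ℝ) ≤ ((n : ℝ) + 1) * t := mul_nonneg (by positivity) ht
    simp only [Function.comp_apply, Nat.cast_add, Nat.cast_one]
    rw [mul_comm t, natCast_floor_eq_intCast_floor hnt]
  · have hn : (0 : ℝ) < (n : ℝ) + 1 := by positivity
    have hfloor : (0 : ℝ) ≤ ⌊((n : ℝ) + 1) * t⌋ :=
      Int.cast_nonneg (Int.floor_nonneg.2 (mul_nonneg hn.le ht))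
    exact ⟨div_nonneg hfloor hn.le, floor_mul_div_le hn t⟩

theorem eqOn_gridLimsup {ω : Ω} (hM : ContinuousOn (fun t => M t ω) (Icc 0 T)) :
    EqOn (fun t => gridLimsup M t ω) (fun t => M t ω) (Icc 0 T) := fun t ht =>
  gridLimsup_eq ht.1 ((hM t ht).mono (Icc_subset_Icc_right ht.2))

end GridLimsup

section SquareIntegrable

variable {α Ω E : Type*} {mα : MeasurableSpace α} {m mΩ : MeasurableSpace Ω}
  [NormedAddCommGroup E] {ν : Measure α} {Q : Measure Ω}

theorem sq_eLpNorm_two (f : Ω → E) : eLpNorm f 2 Q ^ 2 = ∫⁻ ω, ‖f ω‖ₑ ^ 2 ∂Q := by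
  simpa using eLpNorm_nnreal_pow_eq_lintegral (f := f) (μ := Q) (two_ne_zero (α := NNReal))

theorem memLp_two_iff_lintegral_enorm_sq_lt_top {f : Ω → E} (hf : AEStronglyMeasurable f Q) :
    MemLp f 2 Q ↔ ∫⁻ ω, ‖f ω‖ₑ ^ 2 ∂Q < ∞ := by
  rw [← sq_eLpNorm_two, ENNReal.pow_lt_top_iff, or_iff_left two_ne_zero, MemLp,
    and_iff_right hf]

variable [NormedSpace ℝ E]

theorem memLp_two_integral [IsFiniteMeasure ν] {g : α → Ω → E}
    (hg : StronglyMeasurable (Function.uncurry g))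
    (hfin : ∫⁻ ω, ∫⁻ x, ‖g x ω‖ₑ ^ 2 ∂ν ∂Q < ∞) : MemLp (fun ω => ∫ x, g x ω ∂ν) 2 Q := by
  refine (memLp_two_iff_lintegral_enorm_sq_lt_top
    hg.integral_prod_left'.aestronglyMeasurable).2 ?_
  calc ∫⁻ ω, ‖∫ x, g x ω ∂ν‖ₑ ^ 2 ∂Q ≤ ∫⁻ ω, ν univ * ∫⁻ x, ‖g x ω‖ₑ ^ 2 ∂ν ∂Q :=
        lintegral_mono fun ω => (pow_le_pow_left' (enorm_integral_le_lintegral_enorm _) 2).trans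
          (sq_lintegral_le_measure_univ_mul hg.of_uncurry_right.enorm.aemeasurable)
    _ = ν univ * ∫⁻ ω, ∫⁻ x, ‖g x ω‖ₑ ^ 2 ∂ν ∂Q :=
        lintegral_const_mul' _ _ (by finiteness)
    _ < ∞ := ENNReal.mul_lt_top (by finiteness) hfin

theorem eLpNorm_sub_condExp_le [CompleteSpace E] (hm : m ≤ mΩ) [SigmaFinite (Q.trim hm)]
    {p : ℝ≥0∞} (hp : 1 ≤ p) {f g : Ω → E} (hf : Integrable f Q) (hg : Integrable g Q)
    (hgm : StronglyMeasurable[m] g) :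
    eLpNorm (f - Q[f|m]) p Q ≤ 2 * eLpNorm (f - g) p Q := by
  have hcond : f - Q[f|m] =ᵐ[Q] (f - g) - Q[f - g|m] := by
    filter_upwards [condExp_sub hf hg m] with ω h
    rw [condExp_of_stronglyMeasurable hm hgm hg] at h
    simp only [Pi.sub_apply] at h ⊢
    rw [h, sub_sub_sub_cancel_right]
  calc eLpNorm (f - Q[f|m]) p Q = eLpNorm ((f - g) - Q[f - g|m]) p Q := eLpNorm_congr_ae hcond
    _ ≤ eLpNorm (f - g) p Q + eLpNorm (Q[f - g|m]) p Q :=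
        eLpNorm_sub_le (hf.sub hg).1 integrable_condExp.1 hp
    _ ≤ eLpNorm (f - g) p Q + eLpNorm (f - g) p Q := by
        gcongr
        exact eLpNorm_condExp_le_eLpNorm _ hp
    _ = 2 * eLpNorm (f - g) p Q := (two_mul _).symm

end SquareIntegrable

section EquivalentProbability

variable {Ω : Type*} {mΩ : MeasurableSpace Ω}

theorem exists_equivalent_probability_lintegral_lt_top (μ : Measure Ω) [SFinite μ] [NeZero μ]
    {B : Ω → ℝ≥0∞} (hB : AEMeasurable B μ) (hfin : ∀ᵐ ω ∂μ, B ω < ∞) :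
    ∃ Q : Measure Ω, IsProbabilityMeasure Q ∧ Q ≪ μ ∧ μ ≪ Q ∧ ∫⁻ ω, B ω ∂Q < ∞ := by
  set P := μ.toFinite
  have hPμ : P ≪ μ := toFinite_absolutelyContinuous μ
  have hBP : AEMeasurable B P := hB.mono_ac hPμ
  have hfinP : ∀ᵐ ω ∂P, B ω < ∞ := hPμ.ae_le hfin
  have hρ : AEMeasurable (fun ω => (1 + B ω)⁻¹) P := (hBP.const_add 1).inv
  set ν := P.withDensity fun ω => (1 + B ω)⁻¹ with hν
  have hμν : μ ≪ ν := (absolutelyContinuous_toFinite μ).trans <|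
    withDensity_absolutelyContinuous' hρ
      (hfinP.mono fun ω h => ENNReal.inv_ne_zero.2 (by finiteness))
  have : IsFiniteMeasure ν := isFiniteMeasure_withDensity <| ne_top_of_le_ne_top
    (measure_ne_top P univ) ((lintegral_mono fun _ => ENNReal.inv_le_one.2 le_self_add).trans_eq
      lintegral_one)
  have : NeZero ν := ⟨fun h => NeZero.ne μ (Measure.absolutelyContinuous_zero_iff.1 (h ▸ hμν))⟩
  have hBν : ∫⁻ ω, B ω ∂ν < ∞ := by
    rw [hν, lintegral_withDensity_eq_lintegral_mul₀ hρ hBP]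
    refine (lintegral_mono fun ω => ?_).trans_lt
      (lintegral_one.trans_lt (measure_lt_top P univ))
    rw [Pi.mul_apply, mul_comm, ← div_eq_mul_inv]
    exact ENNReal.div_le_of_le_mul (by rw [one_mul]; exact le_add_self)
  refine ⟨(ν univ)⁻¹ • ν, inferInstance, ?_, ?_, ?_⟩
  · exact Measure.smul_absolutelyContinuous.trans
      ((withDensity_absolutelyContinuous _ _).trans hPμ)
  · exact hμν.trans (Measure.absolutelyContinuous_smul
      (ENNReal.inv_ne_zero.2 (measure_ne_top ν univ)))
  · rw [lintegral_smul_measure]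
    exact ENNReal.mul_lt_top (ENNReal.inv_lt_top.2 (Measure.measure_univ_pos.2 (NeZero.ne ν))) hBν

end EquivalentProbability

section ProductMeasure

variable {α β Ω : Type*} {mα : MeasurableSpace α} {mβ : MeasurableSpace β}
  {mΩ : MeasurableSpace Ω} {Q : Measure Ω}

theorem aemeasurable_uncurry_of_ae_eqOn {ν : Measure α} {u v : α → Ω → β} {s : Set α}
    (hv : Measurable (Function.uncurry v)) (hs : MeasurableSet s)
    (h : ∀ᵐ ω ∂Q, EqOn (fun x => v x ω) (fun x => u x ω) s) :
    AEMeasurable (Function.uncurry u) ((ν.restrict s).prod Q) := by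
  refine ⟨Function.uncurry v, hv, ?_⟩
  filter_upwards [Measure.quasiMeasurePreserving_snd.ae h,
    Measure.quasiMeasurePreserving_fst.ae (ae_restrict_mem hs)] with p hp hps
  exact (hp hps).symm

theorem lintegral_lintegral_hardy_le [SFinite Q] {a b : ℝ} {D f : ℝ → Ω → ℝ≥0∞}
    (hD : AEMeasurable (Function.uncurry D) ((volume.restrict (Ioo a b)).prod Q))
    (hf : Measurable (Function.uncurry f))
    (h : ∀ t ∈ Ioo a b, ∫⁻ ω, D t ω ^ 2 ∂Q ≤ ∫⁻ ω, (∫⁻ u in Ioo t b, f u ω) ^ 2 ∂Q) :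
    ∫⁻ ω, (∫⁻ t in Ioo a b, (ENNReal.ofReal (b - t)⁻¹ * D t ω) ^ 2) ∂Q
      ≤ 4 * ∫⁻ ω, (∫⁻ u in Ioo a b, f u ω ^ 2) ∂Q := by
  have hfω (ω : Ω) : AEMeasurable (f · ω) (volume.restrict (Ioo a b)) :=
    hf.of_uncurry_right.aemeasurable
  have haverage : Measurable (Function.uncurry fun t ω =>
      ∫⁻ u in Ioo a b, hardyKernel b t u * f u ω) :=
    Measurable.lintegral_prod_right' <|
      (measurable_hardyKernel.comp (by fun_prop :
        Measurable fun q : (ℝ × Ω) × ℝ => (q.1.1, q.2))).mul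
      (hf.comp (by fun_prop : Measurable fun q : (ℝ × Ω) × ℝ => (q.2, q.1.2)))
  have hweight : Measurable fun p : ℝ × Ω => ENNReal.ofReal (b - p.1)⁻¹ := by fun_prop
  calc ∫⁻ ω, (∫⁻ t in Ioo a b, (ENNReal.ofReal (b - t)⁻¹ * D t ω) ^ 2) ∂Q
      = ∫⁻ t in Ioo a b, ∫⁻ ω, (ENNReal.ofReal (b - t)⁻¹ * D t ω) ^ 2 ∂Q :=
        (lintegral_lintegral_swap ((hweight.aemeasurable.mul hD).pow_const 2)).symm
    _ ≤ ∫⁻ t in Ioo a b, ∫⁻ ω, (∫⁻ u in Ioo a b, hardyKernel b t u * f u ω) ^ 2 ∂Q := by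
        refine setLIntegral_mono' measurableSet_Ioo fun t ht => ?_
        simp only [setLIntegral_hardyKernel_mul ht.1.le (hfω _), mul_pow]
        rw [lintegral_const_mul' _ _ (by finiteness), lintegral_const_mul' _ _ (by finiteness)]
        gcongr _ * ?_
        exact h t ht
    _ = ∫⁻ ω, (∫⁻ t in Ioo a b, (∫⁻ u in Ioo a b, hardyKernel b t u * f u ω) ^ 2) ∂Q :=
        lintegral_lintegral_swap (haverage.pow_const 2).aemeasurable
    _ ≤ ∫⁻ ω, 4 * (∫⁻ u in Ioo a b, f u ω ^ 2) ∂Q := lintegral_mono fun ω => by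
        refine (setLIntegral_congr_fun measurableSet_Ioo fun t ht => ?_).trans_le
          (hardy_inequality (hfω ω))
        simp only [setLIntegral_hardyKernel_mul ht.1.le (hfω ω)]
    _ = 4 * ∫⁻ ω, (∫⁻ u in Ioo a b, f u ω ^ 2) ∂Q := lintegral_const_mul' _ _ (by finiteness)

end ProductMeasure

section BridgeDecomposition

variable {Ω : Type*} {mΩ : MeasurableSpace Ω} {μ Q : Measure Ω} {ℱ : Filtration ℝ mΩ} {T t : ℝ}
  {ξ ξ' : Ω → ℝ} {β M : ℝ → Ω → ℝ}

theorem memB20_iff_memLp_two : MemB20 μ ℱ T ξ β ↔ IsStronglyProgressive ℱ β ∧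
    (∀ᵐ ω ∂μ, MemLp (β · ω) 2 (volume.restrict (Ioc 0 T))) ∧
    (fun ω => ∫ u in Ioc 0 T, β u ω) =ᵐ[μ] ξ := by
  refine and_congr_right fun hβ => and_congr_left fun _ => ?_
  have hpath (ω : Ω) : StronglyMeasurable (β · ω) :=
    (stronglyMeasurable_uncurry_of_isStronglyProgressive hβ).of_uncurry_right
  simp only [ofReal_sq_eq_enorm_sq,
    memLp_two_iff_lintegral_enorm_sq_lt_top (hpath _).aestronglyMeasurable]

theorem MemB20.mono_ac (hβ : MemB20 μ ℱ T ξ β) (hQ : Q ≪ μ) : MemB20 Q ℱ T ξ β :=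
  ⟨hβ.1, hQ.ae_le hβ.2.1, hQ.ae_le hβ.2.2⟩

theorem MemB20.congr (hβ : MemB20 μ ℱ T ξ β) (hξ : ξ =ᵐ[μ] ξ') : MemB20 μ ℱ T ξ' β :=
  ⟨hβ.1, hβ.2.1, EventuallyEq.trans hβ.2.2 hξ⟩

theorem memB20_bridgeDrift_of_ae_continuousOn (hT : 0 < T) (hM : Adapted ℱ M)
    (hcont : ∀ᵐ ω ∂μ, ContinuousOn (fun t => M t ω) (Icc 0 T))
    (hfin : ∀ᵐ ω ∂μ, ∫⁻ t in Ioc 0 T, ‖bridgeDrift T (fun u => M u ω) t‖ₑ ^ 2 < ∞) :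
    MemB20 μ ℱ T (M T) fun t ω => bridgeDrift T (fun u => gridLimsup M u ω) t := by
  have hprog := isStronglyProgressive_bridgeDrift T (isStronglyProgressive_gridLimsup hM)
  have hpath (ω : Ω) : StronglyMeasurable fun t => bridgeDrift T (fun u => gridLimsup M u ω) t :=
    (stronglyMeasurable_uncurry_of_isStronglyProgressive hprog).of_uncurry_right
  have hL2 : ∀ᵐ ω ∂μ, MemLp (fun t => bridgeDrift T (fun u => gridLimsup M u ω) t) 2
      (volume.restrict (Ioc 0 T)) := by
    filter_upwards [hcont, hfin] with ω hω hlt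
    rw [memLp_two_iff_lintegral_enorm_sq_lt_top (hpath ω).aestronglyMeasurable]
    rwa [setLIntegral_congr_fun measurableSet_Ioc fun t ht => by
      rw [bridgeDrift_congr (eqOn_gridLimsup hω) (Ioc_subset_Icc_self ht)]]
  refine memB20_iff_memLp_two.2 ⟨hprog, hL2, ?_⟩
  filter_upwards [hcont, hL2] with ω hω hLω
  have hgrid : EqOn (fun t => gridLimsup M t ω) (fun t => M t ω) (Icc 0 T) := eqOn_gridLimsup hω
  rw [setIntegral_bridgeDrift hT (hω.congr hgrid) (hLω.integrable one_le_two)]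
  exact hgrid ⟨hT.le, le_rfl⟩

namespace IsContModOfCondexpMart

theorem terminal_ae_eq [SigmaFinite (Q.trim (ℱ.le T))] (hM : IsContModOfCondexpMart Q ℱ T ξ M)
    (hT : 0 ≤ T) (hξ : AEStronglyMeasurable[ℱ T] ξ Q) (hint : Integrable ξ Q) : M T =ᵐ[Q] ξ :=
  (hM.2.2 T ⟨hT, le_rfl⟩).trans (condExp_of_aestronglyMeasurable' (ℱ.le T) hξ hint)

theorem aemeasurable_uncurry (hM : IsContModOfCondexpMart Q ℱ T ξ M) :
    AEMeasurable (Function.uncurry M) ((volume.restrict (Icc 0 T)).prod Q) :=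
  aemeasurable_uncurry_of_ae_eqOn (stronglyMeasurable_uncurry_of_isStronglyProgressive
    (isStronglyProgressive_gridLimsup hM.1)).measurable measurableSet_Icc
    (hM.2.1.mono fun _ => eqOn_gridLimsup)

theorem aemeasurable_uncurry_bridgeDrift (hM : IsContModOfCondexpMart Q ℱ T ξ M) :
    AEMeasurable (Function.uncurry fun t ω => bridgeDrift T (fun u => M u ω) t)
      ((volume.restrict (Icc 0 T)).prod Q) :=
  aemeasurable_uncurry_of_ae_eqOn (stronglyMeasurable_uncurry_of_isStronglyProgressive
    (isStronglyProgressive_bridgeDrift T (isStronglyProgressive_gridLimsup hM.1))).measurable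
    measurableSet_Icc
    (hM.2.1.mono fun _ hω _ => bridgeDrift_congr (eqOn_gridLimsup hω))

theorem memB20_bridgeDrift [IsFiniteMeasure Q] (hM : IsContModOfCondexpMart Q ℱ T ξ M)
    (hT : 0 < T) (hξ : AEStronglyMeasurable[ℱ T] ξ Q) (hint : Integrable ξ Q)
    (hfin : ∫⁻ ω, (∫⁻ t in Ioc 0 T, ‖bridgeDrift T (fun u => M u ω) t‖ₑ ^ 2) ∂Q < ∞) :
    MemB20 Q ℱ T ξ fun t ω => bridgeDrift T (fun u => gridLimsup M u ω) t := by
  have hmeas : AEMeasurable (Function.uncurry fun t ω => bridgeDrift T (fun u => M u ω) t)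
      ((volume.restrict (Ioc 0 T)).prod Q) := by
    rw [restrict_Ioc_eq_restrict_Icc]
    exact hM.aemeasurable_uncurry_bridgeDrift
  exact (memB20_bridgeDrift_of_ae_continuousOn hT hM.1 hM.2.1
    (ae_lt_top' (hmeas.enorm.pow_const 2).lintegral_prod_left' hfin.ne)).congr
    (hM.terminal_ae_eq hT.le hξ hint)

end IsContModOfCondexpMart

theorem enorm_setIntegral_Ioc_sub_le {E : Type*} [NormedAddCommGroup E] [NormedSpace ℝ E]
    {a b : ℝ} {f : ℝ → E} (hf : IntegrableOn f (Ioc a b)) (ht : t ∈ Icc a b) :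
    ‖(∫ u in Ioc a b, f u) - ∫ u in Ioc a t, f u‖ₑ ≤ ∫⁻ u in Ioo t b, ‖f u‖ₑ := by
  have hset : Ioc a b \ Ioc a t = Ioc t b := by grind
  rw [← setIntegral_sdiff measurableSet_Ioc hf (Ioc_subset_Ioc_right ht.2), hset,
    restrict_Ioo_eq_restrict_Ioc]
  exact enorm_integral_le_lintegral_enorm _

namespace MemB20

theorem memLp_setIntegral (hβ : MemB20 Q ℱ T ξ β)
    (hfin : ∫⁻ ω, (∫⁻ u in Ioc 0 T, ‖β u ω‖ₑ ^ 2) ∂Q < ∞) (ht : t ≤ T) :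
    MemLp (fun ω => ∫ u in Ioc 0 t, β u ω) 2 Q :=
  memLp_two_integral (stronglyMeasurable_uncurry_of_isStronglyProgressive hβ.1) <|
    (lintegral_mono fun _ => lintegral_mono_set (Ioc_subset_Ioc_right ht)).trans_lt hfin

theorem memLp_two (hβ : MemB20 Q ℱ T ξ β)
    (hfin : ∫⁻ ω, (∫⁻ u in Ioc 0 T, ‖β u ω‖ₑ ^ 2) ∂Q < ∞) : MemLp ξ 2 Q :=
  (hβ.memLp_setIntegral hfin le_rfl).ae_eq hβ.2.2

theorem lintegral_enorm_sub_condExp_sq_le [IsFiniteMeasure Q] (hβ : MemB20 Q ℱ T ξ β)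
    (hfin : ∫⁻ ω, (∫⁻ u in Ioc 0 T, ‖β u ω‖ₑ ^ 2) ∂Q < ∞) (ht : t ∈ Icc 0 T) :
    ∫⁻ ω, ‖ξ ω - (Q[ξ|ℱ t]) ω‖ₑ ^ 2 ∂Q ≤ ∫⁻ ω, (∫⁻ u in Ioo t T, 2 * ‖β u ω‖ₑ) ^ 2 ∂Q := by
  obtain ⟨hprog, hL2, hξ⟩ := memB20_iff_memLp_two.1 hβ
  set Y : Ω → ℝ := fun ω => ∫ u in Ioc 0 t, β u ω
  have hY : StronglyMeasurable[ℱ t] Y :=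
    (isStronglyProgressive_setIntegral_Ioc hprog 0).stronglyAdapted t
  have hprojection : eLpNorm (ξ - Q[ξ|ℱ t]) 2 Q ≤ 2 * eLpNorm (ξ - Y) 2 Q :=
    eLpNorm_sub_condExp_le (ℱ.le t) one_le_two ((hβ.memLp_two hfin).integrable one_le_two)
      ((hβ.memLp_setIntegral hfin ht.2).integrable one_le_two) hY
  calc ∫⁻ ω, ‖ξ ω - (Q[ξ|ℱ t]) ω‖ₑ ^ 2 ∂Q = eLpNorm (ξ - Q[ξ|ℱ t]) 2 Q ^ 2 :=
        (sq_eLpNorm_two _).symm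
    _ ≤ (2 * eLpNorm (ξ - Y) 2 Q) ^ 2 := pow_le_pow_left' hprojection 2
    _ = ∫⁻ ω, (2 * ‖ξ ω - Y ω‖ₑ) ^ 2 ∂Q := by
        simp only [mul_pow, sq_eLpNorm_two, Pi.sub_apply]
        rw [lintegral_const_mul' _ _ (by finiteness)]
    _ ≤ ∫⁻ ω, (∫⁻ u in Ioo t T, 2 * ‖β u ω‖ₑ) ^ 2 ∂Q := lintegral_mono_ae <| by
        filter_upwards [hξ, hL2] with ω hω hLω
        rw [lintegral_const_mul' _ _ (by finiteness), ← hω]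
        gcongr
        exact enorm_setIntegral_Ioc_sub_le (hLω.integrable one_le_two) ht

theorem lintegral_lintegral_enorm_sub_div_sq_le [IsFiniteMeasure Q] (hβ : MemB20 Q ℱ T ξ β)
    (hfin : ∫⁻ ω, (∫⁻ u in Ioc 0 T, ‖β u ω‖ₑ ^ 2) ∂Q < ∞)
    (hM : IsContModOfCondexpMart Q ℱ T ξ M) :
    ∫⁻ ω, (∫⁻ t in Ioo 0 T, ‖(ξ ω - M t ω) / (T - t)‖ₑ ^ 2) ∂Q
      ≤ 16 * ∫⁻ ω, (∫⁻ u in Ioc 0 T, ‖β u ω‖ₑ ^ 2) ∂Q := by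
  have hξ : AEMeasurable ξ Q := (hβ.memLp_two hfin).1.aemeasurable
  have hMmeas : AEMeasurable (Function.uncurry M) ((volume.restrict (Ioo 0 T)).prod Q) := by
    rw [restrict_Ioo_eq_restrict_Icc]
    exact hM.aemeasurable_uncurry
  have hβmeas : Measurable (Function.uncurry fun u ω => 2 * ‖β u ω‖ₑ) :=
    (stronglyMeasurable_uncurry_of_isStronglyProgressive hβ.1).enorm.const_mul 2
  have hbound : ∀ t ∈ Ioo 0 T, ∫⁻ ω, ‖ξ ω - M t ω‖ₑ ^ 2 ∂Q
      ≤ ∫⁻ ω, (∫⁻ u in Ioo t T, 2 * ‖β u ω‖ₑ) ^ 2 ∂Q := fun t ht => by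
    rw [lintegral_congr_ae ((hM.2.2 t (Ioo_subset_Icc_self ht)).mono fun ω hω => by rw [hω])]
    exact hβ.lintegral_enorm_sub_condExp_sq_le hfin (Ioo_subset_Icc_self ht)
  calc ∫⁻ ω, (∫⁻ t in Ioo 0 T, ‖(ξ ω - M t ω) / (T - t)‖ₑ ^ 2) ∂Q
      = ∫⁻ ω, (∫⁻ t in Ioo 0 T, (ENNReal.ofReal (T - t)⁻¹ * ‖ξ ω - M t ω‖ₑ) ^ 2) ∂Q :=
        lintegral_congr fun ω => setLIntegral_congr_fun measurableSet_Ioo fun t ht => by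
          rw [div_eq_inv_mul, enorm_mul, Real.enorm_of_nonneg (inv_nonneg.2 (sub_pos.2 ht.2).le)]
    _ ≤ 4 * ∫⁻ ω, (∫⁻ u in Ioo 0 T, (2 * ‖β u ω‖ₑ) ^ 2) ∂Q :=
        lintegral_lintegral_hardy_le (hξ.comp_snd.sub hMmeas).enorm hβmeas hbound
    _ = 16 * ∫⁻ ω, (∫⁻ u in Ioc 0 T, ‖β u ω‖ₑ ^ 2) ∂Q := by
        simp only [mul_pow, restrict_Ioo_eq_restrict_Ioc,
          lintegral_const_mul' ((2 : ℝ≥0∞) ^ 2) _ (by finiteness)]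
        rw [← mul_assoc]
        norm_num

theorem lintegral_lintegral_bridgeDrift_sq_lt_top [IsFiniteMeasure Q] (hβ : MemB20 Q ℱ T ξ β)
    (hfin : ∫⁻ ω, (∫⁻ u in Ioc 0 T, ‖β u ω‖ₑ ^ 2) ∂Q < ∞)
    (hM : IsContModOfCondexpMart Q ℱ T ξ M) :
    ∫⁻ ω, (∫⁻ t in Ioc 0 T, ‖bridgeDrift T (fun u => M u ω) t‖ₑ ^ 2) ∂Q < ∞ := by
  have hξ : MemLp (fun ω => ξ ω / T) 2 Q := by
    simpa only [div_eq_mul_inv] using (hβ.memLp_two hfin).mul_const T⁻¹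
  have hξfin : ∫⁻ ω, ‖ξ ω / T‖ₑ ^ 2 ∂Q < ∞ := (memLp_two_iff_lintegral_enorm_sq_lt_top hξ.1).1 hξ
  have hhardy : ∫⁻ ω, (∫⁻ t in Ioo 0 T, ‖(ξ ω - M t ω) / (T - t)‖ₑ ^ 2) ∂Q < ∞ :=
    (hβ.lintegral_lintegral_enorm_sub_div_sq_le hfin hM).trans_lt
      (ENNReal.mul_lt_top (by finiteness) hfin)
  calc ∫⁻ ω, (∫⁻ t in Ioc 0 T, ‖bridgeDrift T (fun u => M u ω) t‖ₑ ^ 2) ∂Q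
      ≤ ∫⁻ ω, 2 * (‖ξ ω / T‖ₑ ^ 2 * ENNReal.ofReal T
        + 10 * ∫⁻ t in Ioo 0 T, ‖(ξ ω - M t ω) / (T - t)‖ₑ ^ 2) ∂Q := by
        simp only [← restrict_Ioo_eq_restrict_Ioc]
        exact lintegral_mono_ae (hM.2.1.mono fun ω hω =>
          lintegral_enorm_bridgeDrift_sq_le_add (hω.mono Ico_subset_Icc_self) (ξ ω))
    _ = 2 * ((∫⁻ ω, ‖ξ ω / T‖ₑ ^ 2 ∂Q) * ENNReal.ofReal T
        + 10 * ∫⁻ ω, (∫⁻ t in Ioo 0 T, ‖(ξ ω - M t ω) / (T - t)‖ₑ ^ 2) ∂Q) := by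
        rw [lintegral_const_mul' _ _ (by finiteness),
          lintegral_add_left' ((hξ.1.enorm.pow_const 2).mul_const _),
          lintegral_mul_const' _ _ (by finiteness), lintegral_const_mul' _ _ (by finiteness)]
    _ < ∞ := by finiteness

theorem exists_equivalent_probability_lintegral_sq_lt_top [SFinite μ] [NeZero μ]
    (hβ : MemB20 μ ℱ T ξ β) :
    ∃ Q : Measure Ω, IsProbabilityMeasure Q ∧ Q ≪ μ ∧ μ ≪ Q ∧
      ∫⁻ ω, (∫⁻ u in Ioc 0 T, ‖β u ω‖ₑ ^ 2) ∂Q < ∞ := by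
  have hmeas : Measurable (Function.uncurry fun u ω => ‖β u ω‖ₑ ^ 2) :=
    (stronglyMeasurable_uncurry_of_isStronglyProgressive hβ.1).enorm.pow_const 2
  exact exists_equivalent_probability_lintegral_lt_top μ
    hmeas.lintegral_prod_left'.aemeasurable (by simpa only [ofReal_sq_eq_enorm_sq] using hβ.2.1)

end MemB20

end BridgeDecomposition

theorem stmt5_general {Ω : Type*} {mΩ : MeasurableSpace Ω} (μ : Measure Ω) [SFinite μ] [NeZero μ]
    (ℱ : Filtration ℝ mΩ) (T : ℝ) (hT : 0 < T)
    (ξ : Ω → ℝ) (hξ_meas : AEStronglyMeasurable[ℱ T] ξ μ)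
    (hmod : ∀ Q : Measure Ω, IsProbabilityMeasure Q → Q ≪ μ → μ ≪ Q → MemLp ξ 2 Q →
      ∃ M : ℝ → Ω → ℝ, IsContModOfCondexpMart Q ℱ T ξ M) :
    (∃ β, MemB20 μ ℱ T ξ β) ↔
      ∃ Q : Measure Ω, IsProbabilityMeasure Q ∧ Q ≪ μ ∧ μ ≪ Q ∧ Integrable ξ Q ∧
        ∃ M : ℝ → Ω → ℝ, IsContModOfCondexpMart Q ℱ T ξ M ∧
          (∫⁻ ω, (∫⁻ t in Ioc (0:ℝ) T,
              ENNReal.ofReal ((M t ω / (T - t)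
                - ∫ u in Ioc (0:ℝ) t, M u ω / (T - u)^2)^2)) ∂Q) < ⊤ := by
  simp only [ofReal_sq_eq_enorm_sq]
  constructor
  · rintro ⟨β, hβ⟩
    obtain ⟨Q, hQ, hQμ, hμQ, hfin⟩ := hβ.exists_equivalent_probability_lintegral_sq_lt_top
    have hβQ : MemB20 Q ℱ T ξ β := hβ.mono_ac hQμ
    have hξ : MemLp ξ 2 Q := hβQ.memLp_two hfin
    obtain ⟨M, hM⟩ := hmod Q hQ hQμ hμQ hξ
    exact ⟨Q, hQ, hQμ, hμQ, hξ.integrable one_le_two, M, hM,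
      hβQ.lintegral_lintegral_bridgeDrift_sq_lt_top hfin hM⟩
  · rintro ⟨Q, _, hQμ, hμQ, hint, M, hM, hfin⟩
    exact ⟨_, (hM.memB20_bridgeDrift hT (hξ_meas.mono_ac hQμ) hint hfin).mono_ac hμQ⟩

theorem stmt5
    {Ω : Type*} {mΩ : MeasurableSpace Ω} (μ : Measure Ω) [IsProbabilityMeasure μ]
    (ℱ : Filtration ℝ mΩ) (T : ℝ) (hT : 0 < T)
    (ξ : Ω → ℝ) (hξ_meas : StronglyMeasurable[ℱ T] ξ)
    -- for every equivalent probability `Q` integrating `ξ`, the `Q`-martingale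
    -- `t ↦ E_Q[ξ | ℱ t]` admits a modification with a.s. continuous paths:
    (hmod : ∀ Q : Measure Ω, IsProbabilityMeasure Q → Q ≪ μ → μ ≪ Q → Integrable ξ Q →
      ∃ M : ℝ → Ω → ℝ, IsContModOfCondexpMart Q ℱ T ξ M) :
    (∃ β, MemB20 μ ℱ T ξ β) ↔
      ∃ Q : Measure Ω, IsProbabilityMeasure Q ∧ Q ≪ μ ∧ μ ≪ Q ∧ Integrable ξ Q ∧
        ∃ M : ℝ → Ω → ℝ, IsContModOfCondexpMart Q ℱ T ξ M ∧
          (∫⁻ ω, (∫⁻ t in Ioc (0:ℝ) T,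
              ENNReal.ofReal ((M t ω / (T - t)
                - ∫ u in Ioc (0:ℝ) t, M u ω / (T - u)^2)^2)) ∂Q) < ⊤ := by
  exact stmt5_general μ ℱ T hT ξ hξ_meas.aestronglyMeasurable fun Q hQ hQμ hμQ hξ =>
    hmod Q hQ hQμ hμQ (hξ.integrable one_le_two)
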